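/- (Proposition 1: iterative thresholding vs. mean field.) Let ρ ∈ [0,1], Δ > 0, F ∈ ℝ^{M×N} with normalized columns ∑_μ F_{μi}² = 1 for every i, and y ∈ ℝ^M. A vector a ∈ ℝ^N is a fixed point of the iterative-thresholding map a ↦ η_Δ(a + Fᵀ(y − F a)), where η_Δ acts componentwise via the thresholding function η_Δ(x) = f_a(x,√Δ), if and only if the point (R,Σ,a,c) with Σ_i = √Δ, R_i = a_i + (Fᵀ(y − F a))_i and c_i = f_c(R_i,Σ_i) is a stationary point of the unconstrained mean-field free energy F_MF (all partial derivatives with respect to each R_i, Σ_i, a_i and c_i vanish). -/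

import Mathlib

open MeasureTheory ProbabilityTheory

/-- The prior `P₀ = ρ·N(0,1) + (1-ρ)·δ₀`. -/
noncomputable def P0 (ρ : ℝ) : Measure ℝ :=
  ENNReal.ofReal ρ • gaussianReal 0 1 + ENNReal.ofReal (1 - ρ) • Measure.dirac 0

/-- Partition function `Z(R,Σ) = ∫ exp(-(x-R)²/(2Σ²)) dP₀(x)`. -/
noncomputable def Zpart (ρ R σ : ℝ) : ℝ :=
  ∫ x, Real.exp (-(x - R) ^ 2 / (2 * σ ^ 2)) ∂(P0 ρ)

/-- Posterior mean `f_a(R,Σ)`. -/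
noncomputable def fa (ρ R σ : ℝ) : ℝ :=
  (Zpart ρ R σ)⁻¹ * ∫ x, x * Real.exp (-(x - R) ^ 2 / (2 * σ ^ 2)) ∂(P0 ρ)

/-- Posterior variance `f_c(R,Σ)`. -/
noncomputable def fc (ρ R σ : ℝ) : ℝ :=
  (Zpart ρ R σ)⁻¹ * (∫ x, x ^ 2 * Real.exp (-(x - R) ^ 2 / (2 * σ ^ 2)) ∂(P0 ρ))
    - fa ρ R σ ^ 2

/-- The (unconstrained) mean-field free energy `F_MF(R,Σ,a,c)`. -/
noncomputable def FMF (ρ : ℝ) {M N : ℕ} (F : Fin M → Fin N → ℝ) (y : Fin M → ℝ)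
    (Δ : ℝ) (R Sv a c : Fin N → ℝ) : ℝ :=
  (M : ℝ) / 2 * Real.log (2 * Real.pi * Δ)
    + 1 / (2 * Δ) * ∑ μ, ((y μ - ∑ i, F μ i * a i) ^ 2 + ∑ i, F μ i ^ 2 * c i)
    - ∑ i, (Real.log (Zpart ρ (R i) (Sv i)) + (c i + (a i - R i) ^ 2) / (2 * Sv i ^ 2))

/-!
Under the likelihood `exp (-(x - R)² / (2σ²))` the posterior law of `x` is an exponential tilting of
the prior, and `f_a`, `f_c` are its mean and variance. As a function of `R`, `log Z` differs by a
quadratic polynomial from the cumulant-generating function of the posterior at a reference point; as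
a function of `σ` it is the cumulant-generating function of `-(x - R)²` under the prior at
`1 / (2σ²)`. Hence its partial derivatives are `(f_a - R) / σ²` and `(f_c + (f_a - R)²) / σ³`, and
the stationarity equations of `F_MF` read `a = f_a`, `c + (a - R)² = f_c + (f_a - R)²`,
`R = a + (σ² / Δ) Fᵀ(y - F a)` and `∑_μ F_μi² / Δ = 1 / σ²`. At the point considered here the last
two always hold, and the second follows from the first.
-/

section Calculus

lemma hasDerivAt_sum_update {𝕜 E ι : Type*} [NontriviallyNormedField 𝕜] [NormedAddCommGroup E]
    [NormedSpace 𝕜 E] [Fintype ι] [DecidableEq ι] (g : ι → 𝕜 → E) (v : ι → 𝕜) {i : ι} {g' : E}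
    (h : HasDerivAt (g i) g' (v i)) :
    HasDerivAt (fun t => ∑ j, g j (Function.update v i t j)) g' (v i) := by
  have hsplit : (fun t => ∑ j, g j (Function.update v i t j)) =
      fun t => g i t + ∑ j ∈ Finset.univ.erase i, g j (v j) := by
    funext t
    rw [← Finset.add_sum_erase _ _ (Finset.mem_univ i), Function.update_self]
    congr 1
    refine Finset.sum_congr rfl fun j hj => ?_
    rw [Function.update_of_ne (Finset.ne_of_mem_erase hj)]
  rw [hsplit]
  exact h.add_const _

lemma hasDerivAt_iff_deriv_eq {𝕜 E : Type*} [NontriviallyNormedField 𝕜] [NormedAddCommGroup E]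
    [NormedSpace 𝕜 E] {f : 𝕜 → E} {f' g' : E} {x : 𝕜} (h : HasDerivAt f f' x) :
    HasDerivAt f g' x ↔ f' = g' :=
  ⟨h.unique, h.congr_deriv⟩

end Calculus

section CumulantGeneratingFunction

variable {Ω : Type*} [MeasurableSpace Ω] {μ : Measure Ω} {X : Ω → ℝ}

lemma hasDerivAt_cgf_integral_tilted {t : ℝ} (ht : t ∈ interior (integrableExpSet X μ)) :
    HasDerivAt (cgf X μ) (∫ ω, X ω ∂(μ.tilted (t * X ·))) t :=
  (analyticAt_cgf ht).differentiableAt.hasDerivAt.congr_deriv (integral_tilted_mul_self ht).symm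

lemma mem_interior_integrableExpSet_of_nonpos [IsFiniteMeasure μ] (hX : AEMeasurable X μ)
    (hX0 : ∀ᵐ ω ∂μ, X ω ≤ 0) {t : ℝ} (ht : 0 < t) : t ∈ interior (integrableExpSet X μ) :=
  mem_interior_iff_mem_nhds.2 <| Filter.mem_of_superset (Ioi_mem_nhds ht) fun s hs =>
    integrable_exp_mul_of_le s 0 (le_of_lt hs) hX hX0

lemma integral_sub_sq_eq_variance_add [IsProbabilityMeasure μ] (hX : MemLp X 2 μ) (r : ℝ) :
    ∫ ω, (X ω - r) ^ 2 ∂μ = Var[X; μ] + (∫ ω, X ω ∂μ - r) ^ 2 := by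
  have h := variance_eq_sub (hX.sub (memLp_const r))
  have hmean : ∫ ω, (X ω - r) ∂μ = ∫ ω, X ω ∂μ - r := by
    simp [integral_sub (hX.integrable one_le_two) (integrable_const r)]
  have hvar : Var[X - fun _ => r; μ] = Var[X; μ] := variance_sub_const hX.aestronglyMeasurable r
  simp only [hvar, Pi.pow_apply, Pi.sub_apply, hmean] at h
  linarith

end CumulantGeneratingFunction

section GaussianChannel

/-- The partition function `∫ exp (-(x - R)² / (2σ²)) dP(x)` of a prior `P` observed through a
Gaussian channel of standard deviation `σ` with output `R`. It agrees with `Zpart ρ R σ` by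
definition when `P = P0 ρ`. -/
noncomputable def gaussianPartition (P : Measure ℝ) (R σ : ℝ) : ℝ :=
  ∫ x, Real.exp (-(x - R) ^ 2 / (2 * σ ^ 2)) ∂P

/-- The posterior law of a signal with prior `P` observed through a Gaussian channel of standard
deviation `σ` with output `R`; its mean and variance are the functions `fa` and `fc`. -/
noncomputable def gaussianPosterior (P : Measure ℝ) (R σ : ℝ) : Measure ℝ :=
  P.tilted fun x => -(x - R) ^ 2 / (2 * σ ^ 2)

lemma integral_gaussianPosterior (P : Measure ℝ) (R σ : ℝ) (g : ℝ → ℝ) :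
    ∫ x, g x ∂(gaussianPosterior P R σ) =
      (gaussianPartition P R σ)⁻¹ * ∫ x, g x * Real.exp (-(x - R) ^ 2 / (2 * σ ^ 2)) ∂P := by
  rw [gaussianPosterior, integral_tilted, ← integral_const_mul]
  congr 1 with x
  rw [gaussianPartition, smul_eq_mul]
  ring

lemma gaussian_exponent_add_mul (x R s : ℝ) {σ : ℝ} (hσ : σ ≠ 0) :
    -(x - R) ^ 2 / (2 * σ ^ 2) + s * x =
      -(x - (R + σ ^ 2 * s)) ^ 2 / (2 * σ ^ 2) + (s * R + σ ^ 2 * s ^ 2 / 2) := by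
  field_simp
  ring

variable (P : Measure ℝ) [IsFiniteMeasure P] (R : ℝ) {σ : ℝ}

lemma integrable_exp_neg_sub_sq_div (σ : ℝ) :
    Integrable (fun x => Real.exp (-(x - R) ^ 2 / (2 * σ ^ 2))) P := by
  refine .of_bound (by fun_prop) 1 <| .of_forall fun x => ?_
  rw [Real.norm_of_nonneg (Real.exp_pos _).le, Real.exp_le_one_iff, neg_div]
  exact neg_nonpos.2 (by positivity)

lemma integrableExpSet_id_gaussianPosterior (hσ : σ ≠ 0) :
    integrableExpSet id (gaussianPosterior P R σ) = Set.univ := by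
  refine Set.eq_univ_of_forall fun s => ?_
  refine (integrable_tilted_iff (integrable_exp_neg_sub_sq_div P R σ) _).2 ?_
  simp only [id, smul_eq_mul, ← Real.exp_add, gaussian_exponent_add_mul _ R s hσ]
  simp only [Real.exp_add _ (s * R + σ ^ 2 * s ^ 2 / 2)]
  exact (integrable_exp_neg_sub_sq_div P _ σ).mul_const _

lemma memLp_id_gaussianPosterior (hσ : σ ≠ 0) (p : NNReal) :
    MemLp id p (gaussianPosterior P R σ) :=
  memLp_of_mem_interior_integrableExpSet
    (by simp [integrableExpSet_id_gaussianPosterior P R hσ]) p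

variable [NeZero P]

instance isProbabilityMeasure_gaussianPosterior (σ : ℝ) :
    IsProbabilityMeasure (gaussianPosterior P R σ) :=
  isProbabilityMeasure_tilted (integrable_exp_neg_sub_sq_div P R σ)

lemma gaussianPartition_pos (σ : ℝ) : 0 < gaussianPartition P R σ :=
  integral_exp_pos (integrable_exp_neg_sub_sq_div P R σ)

lemma cgf_id_gaussianPosterior (hσ : σ ≠ 0) (s : ℝ) :
    cgf id (gaussianPosterior P R σ) s =
      s * R + σ ^ 2 * s ^ 2 / 2 + Real.log (gaussianPartition P (R + σ ^ 2 * s) σ)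
        - Real.log (gaussianPartition P R σ) := by
  have hmgf : mgf id (gaussianPosterior P R σ) s =
      Real.exp (s * R + σ ^ 2 * s ^ 2 / 2) * gaussianPartition P (R + σ ^ 2 * s) σ
        / gaussianPartition P R σ := by
    rw [mgf, gaussianPosterior, integral_exp_tilted]
    simp only [Pi.add_apply, id, gaussian_exponent_add_mul _ R s hσ]
    simp only [Real.exp_add _ (s * R + σ ^ 2 * s ^ 2 / 2), integral_mul_const]
    rw [gaussianPartition, gaussianPartition, mul_comm]
  rw [cgf, hmgf, Real.log_div (mul_pos (Real.exp_pos _) (gaussianPartition_pos P _ σ)).ne'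
    (gaussianPartition_pos P R σ).ne', Real.log_mul (Real.exp_pos _).ne'
    (gaussianPartition_pos P _ σ).ne', Real.log_exp]

lemma hasDerivAt_log_gaussianPartition_left (hσ : σ ≠ 0) :
    HasDerivAt (fun t => Real.log (gaussianPartition P t σ))
      ((∫ x, x ∂(gaussianPosterior P R σ) - R) / σ ^ 2) R := by
  have hlog : (fun t => Real.log (gaussianPartition P t σ)) = fun t =>
      cgf id (gaussianPosterior P R σ) ((t - R) / σ ^ 2) - (t ^ 2 - R ^ 2) / (2 * σ ^ 2)
        + Real.log (gaussianPartition P R σ) := by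
    funext t
    have ht : R + σ ^ 2 * ((t - R) / σ ^ 2) = t := by field_simp; ring
    rw [cgf_id_gaussianPosterior P R hσ, ht]
    field_simp
    ring
  have hcgf : HasDerivAt (cgf id (gaussianPosterior P R σ))
      (∫ x, x ∂(gaussianPosterior P R σ)) ((R - R) / σ ^ 2) := by
    have h := hasDerivAt_cgf_integral_tilted (X := id) (μ := gaussianPosterior P R σ) (t := 0)
      (by simp [integrableExpSet_id_gaussianPosterior P R hσ])
    simpa using h
  have hlin : HasDerivAt (fun t => (t - R) / σ ^ 2) (1 / σ ^ 2) R :=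
    ((hasDerivAt_id R).sub_const R).div_const _
  have hquad : HasDerivAt (fun t => (t ^ 2 - R ^ 2) / (2 * σ ^ 2)) (2 * R / (2 * σ ^ 2)) R := by
    simpa using ((hasDerivAt_pow 2 R).sub_const (R ^ 2)).div_const (2 * σ ^ 2)
  rw [hlog]
  refine (((hcgf.comp R hlin).sub hquad).add_const _).congr_deriv ?_
  field_simp

lemma hasDerivAt_log_gaussianPartition_right (hσ : σ ≠ 0) :
    HasDerivAt (fun t => Real.log (gaussianPartition P R t))
      ((Var[id; gaussianPosterior P R σ] + (∫ x, x ∂(gaussianPosterior P R σ) - R) ^ 2) / σ ^ 3)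
      σ := by
  have hexp (t x : ℝ) : -(x - R) ^ 2 / (2 * t ^ 2) = 1 / (2 * t ^ 2) * -(x - R) ^ 2 := by ring
  have hlog : (fun t => Real.log (gaussianPartition P R t)) =
      fun t => cgf (fun x => -(x - R) ^ 2) P (1 / (2 * t ^ 2)) := by
    simp only [gaussianPartition, hexp, cgf, mgf]
  have hcgf := hasDerivAt_cgf_integral_tilted
    (mem_interior_integrableExpSet_of_nonpos (X := fun x => -(x - R) ^ 2) (μ := P) (by fun_prop)
      (.of_forall fun x => neg_nonpos.2 (sq_nonneg _)) (t := 1 / (2 * σ ^ 2)) (by positivity))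
  simp only [← hexp] at hcgf
  have hinv : HasDerivAt (fun t : ℝ => 1 / (2 * t ^ 2)) (-1 / σ ^ 3) σ := by
    refine ((hasDerivAt_const σ 1).fun_div ((hasDerivAt_pow 2 σ).const_mul 2)
      (by positivity)).congr_deriv ?_
    field_simp
    ring
  have hmoment := integral_sub_sq_eq_variance_add (memLp_id_gaussianPosterior P R hσ 2) R
  rw [hlog]
  refine (hcgf.comp σ hinv).congr_deriv ?_
  simp only [id] at hmoment
  rw [integral_neg, ← gaussianPosterior, hmoment]
  ring

end GaussianChannel

section SpikeAndSlab

lemma isProbabilityMeasure_P0 {ρ : ℝ} (hρ : ρ ∈ Set.Icc (0 : ℝ) 1) :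
    IsProbabilityMeasure (P0 ρ) where
  measure_univ := by simp [P0, ← ENNReal.ofReal_add hρ.1 (sub_nonneg.2 hρ.2)]

lemma fa_eq_integral_gaussianPosterior (ρ R σ : ℝ) :
    fa ρ R σ = ∫ x, x ∂(gaussianPosterior (P0 ρ) R σ) :=
  (integral_gaussianPosterior (P0 ρ) R σ fun x => x).symm

variable {ρ : ℝ} (R : ℝ) {σ : ℝ}

lemma fc_eq_variance_gaussianPosterior (hρ : ρ ∈ Set.Icc (0 : ℝ) 1) (hσ : σ ≠ 0) :
    fc ρ R σ = Var[id; gaussianPosterior (P0 ρ) R σ] := by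
  have := isProbabilityMeasure_P0 hρ
  rw [variance_eq_sub (memLp_id_gaussianPosterior (P0 ρ) R hσ 2), fc,
    fa_eq_integral_gaussianPosterior]
  exact congrArg (· - _) (integral_gaussianPosterior (P0 ρ) R σ fun x => x ^ 2).symm

lemma hasDerivAt_log_Zpart_left (hρ : ρ ∈ Set.Icc (0 : ℝ) 1) (hσ : σ ≠ 0) :
    HasDerivAt (fun t => Real.log (Zpart ρ t σ)) ((fa ρ R σ - R) / σ ^ 2) R := by
  have := isProbabilityMeasure_P0 hρ
  rw [fa_eq_integral_gaussianPosterior]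
  exact hasDerivAt_log_gaussianPartition_left (P0 ρ) R hσ

lemma hasDerivAt_log_Zpart_right (hρ : ρ ∈ Set.Icc (0 : ℝ) 1) (hσ : σ ≠ 0) :
    HasDerivAt (fun t => Real.log (Zpart ρ R t)) ((fc ρ R σ + (fa ρ R σ - R) ^ 2) / σ ^ 3) σ := by
  have := isProbabilityMeasure_P0 hρ
  rw [fc_eq_variance_gaussianPosterior R hρ hσ, fa_eq_integral_gaussianPosterior]
  exact hasDerivAt_log_gaussianPartition_right (P0 ρ) R hσ

end SpikeAndSlab

section FreeEnergy

/-- The part of the free energy that depends on the data: the negative log-likelihood of a Gaussian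
channel of variance `Δ`, averaged over a product law with means `a` and variances `c`. -/
noncomputable def expectedLoss {M N : ℕ} (F : Fin M → Fin N → ℝ) (y : Fin M → ℝ) (Δ : ℝ)
    (a c : Fin N → ℝ) : ℝ :=
  (M : ℝ) / 2 * Real.log (2 * Real.pi * Δ)
    + 1 / (2 * Δ) * ∑ μ, ((y μ - ∑ i, F μ i * a i) ^ 2 + ∑ i, F μ i ^ 2 * c i)

/-- The contribution of a single coordinate to the entropic part of the free energy `FMF`, which by
definition is `expectedLoss` minus the sum of these contributions. If `a` and `c` are the mean and
variance of the posterior, it is minus the relative entropy of the posterior to the prior. -/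
noncomputable def siteEntropy (ρ R σ a c : ℝ) : ℝ :=
  Real.log (Zpart ρ R σ) + (c + (a - R) ^ 2) / (2 * σ ^ 2)

section Site

variable {ρ : ℝ} (R σ a c : ℝ)

lemma hasDerivAt_siteEntropy_R (hρ : ρ ∈ Set.Icc (0 : ℝ) 1) (hσ : σ ≠ 0) :
    HasDerivAt (fun t => siteEntropy ρ t σ a c) ((fa ρ R σ - a) / σ ^ 2) R := by
  have hquad := ((((hasDerivAt_id R).const_sub a).fun_pow 2).const_add c).div_const (2 * σ ^ 2)
  refine ((hasDerivAt_log_Zpart_left R hρ hσ).add hquad).congr_deriv ?_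
  simp only [id]
  field_simp
  ring

lemma hasDerivAt_siteEntropy_σ (hρ : ρ ∈ Set.Icc (0 : ℝ) 1) (hσ : σ ≠ 0) :
    HasDerivAt (fun t => siteEntropy ρ R t a c)
      ((fc ρ R σ + (fa ρ R σ - R) ^ 2 - (c + (a - R) ^ 2)) / σ ^ 3) σ := by
  have hquad := (hasDerivAt_const σ (c + (a - R) ^ 2)).fun_div
    ((hasDerivAt_pow 2 σ).const_mul 2) (by positivity)
  refine ((hasDerivAt_log_Zpart_right R hρ hσ).add hquad).congr_deriv ?_
  field_simp
  ring

lemma hasDerivAt_siteEntropy_a (ρ : ℝ) :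
    HasDerivAt (fun t => siteEntropy ρ R σ t c) ((a - R) / σ ^ 2) a := by
  have hquad := ((((hasDerivAt_id a).sub_const R).fun_pow 2).const_add c).div_const (2 * σ ^ 2)
  refine (hquad.const_add _).congr_deriv ?_
  simp only [id]
  field_simp
  ring

lemma hasDerivAt_siteEntropy_c (ρ : ℝ) :
    HasDerivAt (fun t => siteEntropy ρ R σ a t) (1 / (2 * σ ^ 2)) c :=
  (((hasDerivAt_id c).add_const _).div_const _).const_add _

end Site

variable {ρ : ℝ} {M N : ℕ} (F : Fin M → Fin N → ℝ) (y : Fin M → ℝ) (Δ : ℝ)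
  (R Sv a c : Fin N → ℝ) (i : Fin N)

lemma hasDerivAt_expectedLoss_a :
    HasDerivAt (fun t => expectedLoss F y Δ (Function.update a i t) c)
      (-(∑ μ, F μ i * (y μ - ∑ j, F μ j * a j)) / Δ) (a i) := by
  have hpred (μ : Fin M) := hasDerivAt_sum_update (fun j t => F μ j * t) a
    ((hasDerivAt_id (a i)).const_mul (F μ i))
  have hloss := ((HasDerivAt.fun_sum (u := Finset.univ) fun μ _ =>
    (((hpred μ).const_sub (y μ)).fun_pow 2).add_const (∑ j, F μ j ^ 2 * c j)).const_mul
    (1 / (2 * Δ))).const_add ((M : ℝ) / 2 * Real.log (2 * Real.pi * Δ))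
  refine hloss.congr_deriv ?_
  simp only [Function.update_eq_self]
  rw [Finset.mul_sum, ← Finset.sum_neg_distrib, Finset.sum_div]
  refine Finset.sum_congr rfl fun μ _ => ?_
  field_simp
  ring

lemma hasDerivAt_expectedLoss_c :
    HasDerivAt (fun t => expectedLoss F y Δ a (Function.update c i t))
      ((∑ μ, F μ i ^ 2) / (2 * Δ)) (c i) := by
  have hvar (μ : Fin M) := hasDerivAt_sum_update (fun j t => F μ j ^ 2 * t) c
    ((hasDerivAt_id (c i)).const_mul (F μ i ^ 2))
  have hloss := ((HasDerivAt.fun_sum (u := Finset.univ) fun μ _ =>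
    (hvar μ).const_add ((y μ - ∑ j, F μ j * a j) ^ 2)).const_mul
    (1 / (2 * Δ))).const_add ((M : ℝ) / 2 * Real.log (2 * Real.pi * Δ))
  refine hloss.congr_deriv ?_
  simp only [mul_one]
  ring

lemma hasDerivAt_FMF_R_zero_iff (hρ : ρ ∈ Set.Icc (0 : ℝ) 1) (hSv : Sv i ≠ 0) :
    HasDerivAt (fun t => FMF ρ F y Δ (Function.update R i t) Sv a c) 0 (R i) ↔
      a i = fa ρ (R i) (Sv i) := by
  have h := (hasDerivAt_sum_update (fun j t => siteEntropy ρ t (Sv j) (a j) (c j)) R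
    (hasDerivAt_siteEntropy_R (R i) (Sv i) (a i) (c i) hρ hSv)).const_sub (expectedLoss F y Δ a c)
  refine (hasDerivAt_iff_deriv_eq h).trans ?_
  rw [neg_eq_zero, div_eq_zero_iff, or_iff_left (pow_ne_zero 2 hSv), sub_eq_zero, eq_comm]

lemma hasDerivAt_FMF_Sv_zero_iff (hρ : ρ ∈ Set.Icc (0 : ℝ) 1) (hSv : Sv i ≠ 0) :
    HasDerivAt (fun t => FMF ρ F y Δ R (Function.update Sv i t) a c) 0 (Sv i) ↔
      c i + (a i - R i) ^ 2 = fc ρ (R i) (Sv i) + (fa ρ (R i) (Sv i) - R i) ^ 2 := by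
  have h := (hasDerivAt_sum_update (fun j t => siteEntropy ρ (R j) t (a j) (c j)) Sv
    (hasDerivAt_siteEntropy_σ (R i) (Sv i) (a i) (c i) hρ hSv)).const_sub (expectedLoss F y Δ a c)
  refine (hasDerivAt_iff_deriv_eq h).trans ?_
  rw [neg_eq_zero, div_eq_zero_iff, or_iff_left (pow_ne_zero 3 hSv), sub_eq_zero, eq_comm]

lemma hasDerivAt_FMF_a_zero_iff (hSv : Sv i ≠ 0) :
    HasDerivAt (fun t => FMF ρ F y Δ R Sv (Function.update a i t) c) 0 (a i) ↔
      R i = a i + Sv i ^ 2 / Δ * ∑ μ, F μ i * (y μ - ∑ j, F μ j * a j) := by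
  have h := (hasDerivAt_expectedLoss_a F y Δ a c i).sub
    (hasDerivAt_sum_update (fun j t => siteEntropy ρ (R j) (Sv j) t (c j)) a
      (hasDerivAt_siteEntropy_a (R i) (Sv i) (a i) (c i) ρ))
  refine (hasDerivAt_iff_deriv_eq h).trans ?_
  rw [sub_eq_zero, eq_div_iff (pow_ne_zero 2 hSv)]
  constructor <;> intro h' <;> linear_combination h'

lemma hasDerivAt_FMF_c_zero_iff :
    HasDerivAt (fun t => FMF ρ F y Δ R Sv a (Function.update c i t)) 0 (c i) ↔
      (∑ μ, F μ i ^ 2) / Δ = 1 / Sv i ^ 2 := by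
  have h := (hasDerivAt_expectedLoss_c F y Δ a c i).sub
    (hasDerivAt_sum_update (fun j t => siteEntropy ρ (R j) (Sv j) (a j) t) c
      (hasDerivAt_siteEntropy_c (R i) (Sv i) (a i) (c i) ρ))
  refine (hasDerivAt_iff_deriv_eq h).trans ?_
  rw [sub_eq_zero, mul_comm, mul_comm 2 (Sv i ^ 2), ← div_div, ← div_div, div_left_inj' two_ne_zero]

end FreeEnergy

/-- Proposition 1: with normalized columns `∑_μ F_{μi}² = 1`, a vector `a`
is a fixed point of iterative thresholding `a ↦ η_Δ(a + Fᵀ(y − F a))`, where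
`η_Δ(x) = f_a(x,√Δ)` acts componentwise, iff the point `(R,Σ,a,c)` with `Σ_i = √Δ`,
`R_i = a_i + (Fᵀ(y − F a))_i`, `c_i = f_c(R_i,Σ_i)` is a stationary point of the
unconstrained mean-field free energy. -/
theorem stmt6 (ρ : ℝ) (hρ : ρ ∈ Set.Icc (0 : ℝ) 1) {M N : ℕ}
    (F : Fin M → Fin N → ℝ) (y : Fin M → ℝ) (Δ : ℝ) (hΔ : 0 < Δ)
    (hF : ∀ i, ∑ μ, F μ i ^ 2 = 1) (a : Fin N → ℝ)
    (R Sv c : Fin N → ℝ)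
    (hR : ∀ i, R i = a i + ∑ μ, F μ i * (y μ - ∑ j, F μ j * a j))
    (hSv : ∀ i, Sv i = Real.sqrt Δ)
    (hc : ∀ i, c i = fc ρ (R i) (Sv i)) :
    (∀ i, a i = fa ρ (a i + ∑ μ, F μ i * (y μ - ∑ j, F μ j * a j)) (Real.sqrt Δ))
    ↔ ((∀ i, HasDerivAt (fun t => FMF ρ F y Δ (Function.update R i t) Sv a c) 0 (R i)) ∧
       (∀ i, HasDerivAt (fun t => FMF ρ F y Δ R (Function.update Sv i t) a c) 0 (Sv i)) ∧
       (∀ i, HasDerivAt (fun t => FMF ρ F y Δ R Sv (Function.update a i t) c) 0 (a i)) ∧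
       (∀ i, HasDerivAt (fun t => FMF ρ F y Δ R Sv a (Function.update c i t)) 0 (c i))) := by
  have hSv0 (i : Fin N) : Sv i ≠ 0 := hSv i ▸ (Real.sqrt_pos.2 hΔ).ne'
  have hsq (i : Fin N) : Sv i ^ 2 = Δ := by rw [hSv i, Real.sq_sqrt hΔ.le]
  have fixed_iff (i : Fin N) :
      a i = fa ρ (a i + ∑ μ, F μ i * (y μ - ∑ j, F μ j * a j)) (Real.sqrt Δ) ↔
        a i = fa ρ (R i) (Sv i) := by
    rw [← hR, hSv]
  have stationary_a (i : Fin N) :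
      R i = a i + Sv i ^ 2 / Δ * ∑ μ, F μ i * (y μ - ∑ j, F μ j * a j) := by
    rw [hsq, div_self hΔ.ne', one_mul, hR]
  have stationary_c (i : Fin N) : (∑ μ, F μ i ^ 2) / Δ = 1 / Sv i ^ 2 := by rw [hF, hsq]
  simp only [fixed_iff, hasDerivAt_FMF_R_zero_iff F y Δ R Sv a c _ hρ (hSv0 _),
    hasDerivAt_FMF_Sv_zero_iff F y Δ R Sv a c _ hρ (hSv0 _),
    hasDerivAt_FMF_a_zero_iff F y Δ R Sv a c _ (hSv0 _), hasDerivAt_FMF_c_zero_iff]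
  exact ⟨fun ha => ⟨ha, fun i => by rw [hc, ← ha], stationary_a, stationary_c⟩, And.left⟩
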